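/- Let K be a totally real number field of degree d ≥ 2, and identify K ⊗_ℚ ℝ with ℝ^d via the embedding σ = (σ_1, …, σ_d). Then there exists a finite set S of totally positive units of O_K such that for every x = (x_1, …, x_d) ∈ ℝ^d one has: (Σ_i σ_i(u) x_i ≥ Σ_i x_i for all totally positive units u of O_K) if and only if (Σ_i σ_i(u) x_i ≥ Σ_i x_i for all u ∈ S). Consequently the set of trace-minimal elements of ℝ^d is a closed polyhedral cone cut out by finitely many half-spaces with K-rational normal vectors, and for every q > 0 the set of trace-minimal x ∈ ℝ^d with Σ_i x_i ≤ q is compact. -/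

import Mathlib

open NumberField

lemma aux_unit
    (K : Type*) [Field K] [NumberField K] (d : ℕ) (hd2 : 2 ≤ d)
    (σ : Fin d → (K →+* ℝ)) (hσ : Function.Injective σ) (i : Fin d) :
    ∃ u : (𝓞 K)ˣ, (∀ j, 0 < σ j ((u : 𝓞 K) : K)) ∧ (d : ℝ) < σ i ((u : 𝓞 K) : K) ∧
      ∀ j, j ≠ i → σ j ((u : 𝓞 K) : K) < 1 / 2 := by
  classical
  let W : Fin d → InfinitePlace K := fun j => InfinitePlace.mk (Complex.ofRealHom.comp (σ j))
  have hWv : ∀ j (a : K), W j a = |σ j a| := by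
    intro j a
    simp [W, InfinitePlace.apply]
  have hWinj : ∀ j k, W j = W k → j = k := by
    intro j k h
    apply hσ
    have h2 := InfinitePlace.mk_eq_iff.1 h
    ext a
    rcases h2 with h2 | h2
    · have := RingHom.congr_fun h2 a
      simpa using this
    · have := RingHom.congr_fun h2 a
      simpa [ComplexEmbedding.conjugate_coe_eq] using this
  obtain ⟨u, hu⟩ := Units.dirichletUnitTheorem.exists_unit K (W i)
  have hne : ∀ j, σ j ((u : 𝓞 K) : K) ≠ 0 := by
    intro j
    simp
  have hlt : ∀ j, j ≠ i → |σ j ((u : 𝓞 K) : K)| < 1 := by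
    intro j hj
    have h := hu (W j) (fun h => hj (hWinj _ _ h))
    rw [hWv] at h
    by_contra hc
    exact absurd (Real.log_nonneg (not_lt.1 hc)) (not_le.2 h)
  have hgt : 1 < |σ i ((u : 𝓞 K) : K)| := by
    by_contra hc
    have hli : Real.log (W i ((u : 𝓞 K) : K)) ≤ 0 := by
      rw [hWv]
      exact Real.log_nonpos (abs_nonneg _) (not_lt.1 hc)
    obtain ⟨j, hj⟩ : ∃ j : Fin d, j ≠ i := by
      have : Nontrivial (Fin d) := Fin.nontrivial_iff_two_le.2 hd2
      exact exists_ne i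
    have hs := Units.sum_mult_mul_log u
    have : ∑ w : InfinitePlace K, (w.mult : ℝ) * Real.log (w ((u : 𝓞 K) : K)) < 0 := by
      apply Finset.sum_neg'
      · intro w _
        apply mul_nonpos_of_nonneg_of_nonpos (by positivity)
        by_cases hw : w = W i
        · rw [hw]; exact hli
        · exact (hu w hw).le
      · refine ⟨W j, Finset.mem_univ _, mul_neg_of_pos_of_neg ?_ (hu _ (fun h => hj (hWinj _ _ h)))⟩
        exact_mod_cast InfinitePlace.mult_pos
    linarith
  have e1 : ∀ᶠ n : ℕ in Filter.atTop, (d : ℝ) < |σ i ((u : 𝓞 K) : K)| ^ n :=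
    (tendsto_pow_atTop_atTop_of_one_lt hgt).eventually_gt_atTop _
  have e2 : ∀ᶠ n : ℕ in Filter.atTop, ∀ j, j ≠ i → |σ j ((u : 𝓞 K) : K)| ^ n < 1 / 2 := by
    rw [Filter.eventually_all]
    intro j
    by_cases hj : j = i
    · simp [hj]
    · filter_upwards [(tendsto_pow_atTop_nhds_zero_of_lt_one (abs_nonneg _) (hlt j hj)).eventually_lt_const
        (by norm_num : (0 : ℝ) < 1 / 2)] with n hn _
      exact hn
  obtain ⟨n, ⟨h1, h2⟩, hn⟩ := ((e1.and e2).and (Filter.eventually_ge_atTop 1)).exists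
  have key : ∀ j, σ j (((u ^ (2 * n) : (𝓞 K)ˣ) : 𝓞 K) : K) = (|σ j ((u : 𝓞 K) : K)| ^ n) ^ 2 := by
    intro j
    push_cast
    rw [map_pow, ← pow_mul, mul_comm n 2, pow_mul, pow_mul |_|, sq_abs]
  refine ⟨u ^ (2 * n), fun j => ?_, ?_, fun j hj => ?_⟩
  · rw [key]
    have := abs_pos.2 (hne j)
    positivity
  · rw [key]
    have : (2 : ℝ) ≤ d := by exact_mod_cast hd2
    nlinarith
  · rw [key]
    have := h2 j hj
    have h0 : 0 ≤ |σ j ((u : 𝓞 K) : K)| ^ n := by positivity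
    nlinarith

lemma aux_finite
    (K : Type*) [Field K] [NumberField K] (d : ℕ)
    (σ : Fin d → (K →+* ℝ)) (hσ : Function.Injective σ)
    (hd : d = Module.finrank ℚ K) (B : ℝ) :
    {u : (𝓞 K)ˣ | ∀ i, 0 < σ i ((u : 𝓞 K) : K) ∧ σ i ((u : 𝓞 K) : K) ≤ B}.Finite := by
  classical
  have hinj : Function.Injective (fun j => Complex.ofRealHom.comp (σ j)) := by
    intro j k h
    apply hσ
    ext a
    have := RingHom.congr_fun h a
    simpa using this
  have hbij := (Fintype.bijective_iff_injective_and_card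
    (fun j => Complex.ofRealHom.comp (σ j))).2 ⟨hinj, by
      rw [Fintype.card_fin, Embeddings.card K ℂ, hd]⟩
  have hf := Embeddings.finite_of_norm_le K ℂ B
  refine Set.Finite.of_finite_image (f := fun u : (𝓞 K)ˣ => ((u : 𝓞 K) : K)) (hf.subset ?_) ?_
  · rintro _ ⟨u, hu, rfl⟩
    refine ⟨RingOfIntegers.isIntegral_coe _, fun φ => ?_⟩
    obtain ⟨j, rfl⟩ := hbij.2 φ
    have := hu j
    simpa [abs_of_pos this.1] using this.2
  · intro u _ v _ h
    exact Units.ext (RingOfIntegers.ext h)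

theorem stmt5
    (K : Type*) [Field K] [NumberField K] (d : ℕ) (hd2 : 2 ≤ d)
    (σ : Fin d → (K →+* ℝ)) (hσ : Function.Injective σ)
    (hd : d = Module.finrank ℚ K) :
    ∃ S : Finset (𝓞 K)ˣ,
      (∀ u ∈ S, ∀ i, 0 < σ i ((u : 𝓞 K) : K)) ∧
      (∀ x : Fin d → ℝ,
        (∀ u : (𝓞 K)ˣ, (∀ i, 0 < σ i ((u : 𝓞 K) : K)) →
          ∑ i, x i ≤ ∑ i, σ i ((u : 𝓞 K) : K) * x i) ↔
        ∀ u ∈ S, ∑ i, x i ≤ ∑ i, σ i ((u : 𝓞 K) : K) * x i) ∧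
      IsClosed {x : Fin d → ℝ |
        ∀ u : (𝓞 K)ˣ, (∀ i, 0 < σ i ((u : 𝓞 K) : K)) →
          ∑ i, x i ≤ ∑ i, σ i ((u : 𝓞 K) : K) * x i} ∧
      (∀ q : ℝ, 0 < q → IsCompact {x : Fin d → ℝ |
        (∀ u : (𝓞 K)ˣ, (∀ i, 0 < σ i ((u : 𝓞 K) : K)) →
          ∑ i, x i ≤ ∑ i, σ i ((u : 𝓞 K) : K) * x i) ∧ ∑ i, x i ≤ q}) := by
  classical
  choose u hu0 hu1 hu2 using aux_unit K d hd2 σ hσ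
  -- nonnegativity
  have nonneg : ∀ x : Fin d → ℝ,
      (∀ k, ∑ i, x i ≤ ∑ i, σ i ((u k : 𝓞 K) : K) * x i) → ∀ i, 0 ≤ x i := by
    intro x hx
    have : Nonempty (Fin d) := ⟨⟨0, by omega⟩⟩
    obtain ⟨k, hk⟩ := Finite.exists_min x
    have hk0 : 0 ≤ x k := by
      by_contra hneg
      push Not at hneg
      have h := hx k
      have h3 : ∑ i, σ i ((u k : 𝓞 K) : K) * x i - ∑ i, x i
          ≤ ∑ i, ((if i = k then (σ k ((u k : 𝓞 K) : K)) * x k else 0) - x k) := by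
        rw [← Finset.sum_sub_distrib]
        apply Finset.sum_le_sum
        intro i _
        split_ifs with hi
        · subst hi; linarith
        · have a1 := hu0 k i
          have a2 := hu2 k i hi
          have a3 := hk i
          nlinarith
      rw [Finset.sum_sub_distrib, Finset.sum_ite_eq' Finset.univ k, if_pos (Finset.mem_univ k),
        Finset.sum_const, Finset.card_univ, Fintype.card_fin, nsmul_eq_mul] at h3
      have h4 := hu1 k
      nlinarith
    intro i
    exact hk0.trans (hk i)
  have lower : ∀ x : Fin d → ℝ,
      (∀ k, ∑ i, x i ≤ ∑ i, σ i ((u k : 𝓞 K) : K) * x i) →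
      ∀ k, ∑ i, x i ≤ 2 * σ k ((u k : 𝓞 K) : K) * x k := by
    intro x hx k
    have hn := nonneg x hx
    have h := hx k
    rw [← Finset.add_sum_erase _ _ (Finset.mem_univ k)] at h ⊢
    rw [← Finset.add_sum_erase (Finset.univ) (fun i => σ i ((u k : 𝓞 K) : K) * x i) (Finset.mem_univ k)] at h
    have h2 : ∑ i ∈ Finset.univ.erase k, σ i ((u k : 𝓞 K) : K) * x i ≤
        ∑ i ∈ Finset.univ.erase k, (1 / 2) * x i := by
      apply Finset.sum_le_sum
      intro i hi
      exact mul_le_mul_of_nonneg_right (hu2 k i (Finset.ne_of_mem_erase hi)).le (hn i)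
    rw [← Finset.mul_sum] at h2
    have := hn k
    linarith
  obtain ⟨B, hB⟩ : ∃ B : ℝ, ∀ k i, 2 * σ i ((u k : 𝓞 K) : K) ≤ B := by
    obtain ⟨B, hB⟩ := (Set.finite_range
      (fun p : Fin d × Fin d => 2 * σ p.2 ((u p.1 : 𝓞 K) : K))).bddAbove
    exact ⟨B, fun k i => hB ⟨(k, i), rfl⟩⟩
  have hfin := aux_finite K d σ hσ hd B
  have hclosed : IsClosed {x : Fin d → ℝ |
        ∀ u : (𝓞 K)ˣ, (∀ i, 0 < σ i ((u : 𝓞 K) : K)) →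
          ∑ i, x i ≤ ∑ i, σ i ((u : 𝓞 K) : K) * x i} := by
    simp only [Set.ofPred_forall]
    refine isClosed_iInter fun v => isClosed_iInter fun _ => isClosed_le ?_ ?_ <;> fun_prop
  refine ⟨hfin.toFinset, ?_, ?_, hclosed, ?_⟩
  · intro v hv i
    exact ((hfin.mem_toFinset.1 hv) i).1
  · intro x
    constructor
    · intro h v hv
      exact h v fun i => ((hfin.mem_toFinset.1 hv) i).1
    · intro h v hv
      have hx : ∀ k, ∑ i, x i ≤ ∑ i, σ i ((u k : 𝓞 K) : K) * x i := by
        intro k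
        apply h
        rw [hfin.mem_toFinset]
        intro i
        exact ⟨hu0 k i, by linarith [hB k i, hu0 k i]⟩
      by_cases hvB : ∀ i, σ i ((v : 𝓞 K) : K) ≤ B
      · exact h v (hfin.mem_toFinset.2 fun i => ⟨hv i, hvB i⟩)
      · push Not at hvB
        obtain ⟨k, hk⟩ := hvB
        have hn := nonneg x hx
        calc ∑ i, x i ≤ 2 * σ k ((u k : 𝓞 K) : K) * x k := lower x hx k
          _ ≤ σ k ((v : 𝓞 K) : K) * x k :=
            mul_le_mul_of_nonneg_right ((hB k k).trans hk.le) (hn k)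
          _ ≤ _ := Finset.single_le_sum (f := fun i => σ i ((v : 𝓞 K) : K) * x i)
            (fun i _ => mul_nonneg (hv i).le (hn i)) (Finset.mem_univ k)
  · intro q hq
    refine IsCompact.of_isClosed_subset (isCompact_Icc (a := (0 : Fin d → ℝ)) (b := fun _ => q)) ?_ ?_
    · exact hclosed.inter (isClosed_le (f := fun x : Fin d → ℝ => ∑ i, x i) (by fun_prop) continuous_const)
    · rintro x ⟨h, hxq⟩
      have hn := nonneg x fun k => h _ (hu0 k)
      refine ⟨hn, fun i => ?_⟩
      exact (Finset.single_le_sum (fun i _ => hn i) (Finset.mem_univ i)).trans hxq
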